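/- For a positive integer n, r₃(n) = 0 if and only if n is of the form 4^a(8k+7) for some nonnegative integers a, k (Legendre's three-square theorem). -/

import Mathlib

/-- Number of representations of `m` as a sum of three integer squares. -/
noncomputable def r3 (m : ℕ) : ℕ :=
  Nat.card {v : ℤ × ℤ × ℤ // v.1 ^ 2 + v.2.1 ^ 2 + v.2.2 ^ 2 = (m : ℤ)}

/-!
Numbers `8 k + 7` are excluded modulo `8`, and multiplying by `4` changes nothing because three
squares whose sum is divisible by `4` are all even. For the remaining `n`, suppose `b > 0` and
`b n - 1 > 0` divides `s² + b`, say `a (b n - 1) = s² + b`. Then the ternary form with Gram matrix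
`!![a, s, 1; s, b n - 1, 0; 1, 0, n]` is positive definite of determinant `1`, and it represents `n`
at `(0, 0, 1)`. By Gauss's reduction theory such a form is equivalent to `x² + y² + z²`. A suitable
`b` comes from a prime `p` in an arithmetic progression with `b n - 1 = p` or `b n - 1 = 2 p`:
quadratic reciprocity makes `-b` a square modulo `p`.
-/

/-- The property of being a sum of three integer squares. -/
def IsSumOfThreeSquares (n : ℤ) : Prop :=
  ∃ x y z : ℤ, x ^ 2 + y ^ 2 + z ^ 2 = n

lemma exists_abs_two_mul_add_mul_le (g : ℤ) {m : ℤ} (hm : 0 < m) :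
    ∃ t : ℤ, |2 * (g + t * m)| ≤ m := by
  refine ⟨-((2 * g + m) / (2 * m)), abs_le.2 ?_⟩
  have hdivision := Int.emod_add_mul_ediv (2 * g + m) (2 * m)
  have hnonneg := Int.emod_nonneg (2 * g + m) (b := 2 * m) (by omega)
  have hlt := Int.emod_lt_of_pos (2 * g + m) (b := 2 * m) (by omega)
  constructor <;> linarith

lemma exists_lt_of_mul_eq_add_sq {m r g : ℤ} {v : ℤ → ℤ} (hm : 0 < m) (hr : 4 * r < 3 * m ^ 2)
    (hv : ∀ t, m * v t = r + (g + t * m) ^ 2) : ∃ t, v t < m := by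
  obtain ⟨t, ht⟩ := exists_abs_two_mul_add_mul_le g hm
  have hsq : (2 * (g + t * m)) ^ 2 ≤ m ^ 2 := sq_le_sq' (abs_le.1 ht).1 (abs_le.1 ht).2
  exact ⟨t, lt_of_mul_lt_mul_left (by linarith [hv t]) hm.le⟩

/-- Integral ternary quadratic forms with even cross terms: `⟨a, b, c, d, e, f⟩` stands for
`a x² + b y² + c z² + 2 d y z + 2 e x z + 2 f x y`, that is, for the symmetric Gram matrix
`!![a, f, e; f, b, d; e, d, c]`. -/
structure TernaryForm where
  (a b c d e f : ℤ)

namespace TernaryForm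

/-- The value of a ternary form at an integer vector. -/
def eval (Q : TernaryForm) (x y z : ℤ) : ℤ :=
  Q.a * x ^ 2 + Q.b * y ^ 2 + Q.c * z ^ 2 + 2 * Q.d * y * z + 2 * Q.e * x * z + 2 * Q.f * x * y

/-- The property that `n` is a value of the form at some integer vector, possibly zero or
imprimitive. -/
def Represents (Q : TernaryForm) (n : ℤ) : Prop :=
  ∃ x y z : ℤ, Q.eval x y z = n

/-- The leading `2 × 2` minor of the Gram matrix. -/
def minor (Q : TernaryForm) : ℤ :=
  Q.a * Q.b - Q.f ^ 2

/-- The determinant of the Gram matrix. -/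
def det (Q : TernaryForm) : ℤ :=
  Q.a * Q.b * Q.c + 2 * Q.d * Q.e * Q.f - Q.a * Q.d ^ 2 - Q.b * Q.e ^ 2 - Q.c * Q.f ^ 2

/-- Positive definiteness, encoded through Sylvester's criterion on the leading minors. -/
structure IsPosDef (Q : TernaryForm) : Prop where
  a_pos : 0 < Q.a
  minor_pos : 0 < Q.minor
  det_pos : 0 < Q.det

/-- Gauss's reducedness inequalities, the ones satisfied when neither a binary reduction in `x, y`
nor a binary reduction of the adjoint form in `y, z` makes progress. -/
structure IsReduced (Q : TernaryForm) : Prop where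
  a_sq_le : 3 * Q.a ^ 2 ≤ 4 * Q.minor
  minor_sq_le : 3 * Q.minor ^ 2 ≤ 4 * (Q.a * Q.det)

/-- The form obtained by passing to the basis `t e₁ + e₂, e₁, e₃`: a step of binary reduction. -/
def shearSwapXY (Q : TernaryForm) (t : ℤ) : TernaryForm where
  a := Q.a * t ^ 2 + 2 * Q.f * t + Q.b
  b := Q.a
  c := Q.c
  d := Q.e
  e := Q.d + Q.e * t
  f := Q.f + t * Q.a

/-- The form obtained by passing to the basis `e₁, t e₂ + e₃, e₂`: a step of binary reduction of
the adjoint form. -/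
def shearSwapYZ (Q : TernaryForm) (t : ℤ) : TernaryForm where
  a := Q.a
  b := Q.b * t ^ 2 + 2 * Q.d * t + Q.c
  c := Q.b
  d := Q.d + t * Q.b
  e := Q.f
  f := Q.e + t * Q.f

variable (Q : TernaryForm) (t : ℤ)

lemma a_mul_minor_mul_eval (x y z : ℤ) :
    Q.a * Q.minor * Q.eval x y z =
      Q.minor * (Q.a * x + Q.f * y + Q.e * z) ^ 2 +
        (Q.minor * y + (Q.a * Q.d - Q.e * Q.f) * z) ^ 2 + Q.a * Q.det * z ^ 2 := by
  simp only [minor, eval, det]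
  ring

@[simp]
lemma minor_shearSwapXY : (Q.shearSwapXY t).minor = Q.minor := by
  simp only [minor, shearSwapXY]
  ring

@[simp]
lemma det_shearSwapXY : (Q.shearSwapXY t).det = Q.det := by
  simp only [det, shearSwapXY]
  ring

@[simp]
lemma det_shearSwapYZ : (Q.shearSwapYZ t).det = Q.det := by
  simp only [det, shearSwapYZ]
  ring

lemma a_mul_a_shearSwapXY :
    Q.a * (Q.shearSwapXY t).a = Q.minor + (Q.f + t * Q.a) ^ 2 := by
  simp only [minor, shearSwapXY]
  ring

lemma minor_mul_minor_shearSwapYZ :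
    Q.minor * (Q.shearSwapYZ t).minor =
      Q.a * Q.det + (Q.a * Q.d - Q.e * Q.f + t * Q.minor) ^ 2 := by
  simp only [minor, det, shearSwapYZ]
  ring

lemma represents_shearSwapXY {n : ℤ} : (Q.shearSwapXY t).Represents n ↔ Q.Represents n := by
  constructor
  · rintro ⟨x, y, z, rfl⟩
    exact ⟨t * x + y, x, z, by simp only [eval, shearSwapXY]; ring⟩
  · rintro ⟨x, y, z, rfl⟩
    exact ⟨y, x - t * y, z, by simp only [eval, shearSwapXY]; ring⟩

lemma represents_shearSwapYZ {n : ℤ} : (Q.shearSwapYZ t).Represents n ↔ Q.Represents n := by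
  constructor
  · rintro ⟨x, y, z, rfl⟩
    exact ⟨x, t * y + z, y, by simp only [eval, shearSwapYZ]; ring⟩
  · rintro ⟨x, y, z, rfl⟩
    exact ⟨x, z, y - t * z, by simp only [eval, shearSwapYZ]; ring⟩

variable {Q}

lemma IsPosDef.shearSwapXY (hQ : Q.IsPosDef) : (Q.shearSwapXY t).IsPosDef where
  a_pos := by
    refine pos_of_mul_pos_right ?_ hQ.a_pos.le
    rw [a_mul_a_shearSwapXY]
    exact add_pos_of_pos_of_nonneg hQ.minor_pos (sq_nonneg _)
  minor_pos := by simpa only [minor_shearSwapXY] using hQ.minor_pos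
  det_pos := by simpa only [det_shearSwapXY] using hQ.det_pos

lemma IsPosDef.shearSwapYZ (hQ : Q.IsPosDef) : (Q.shearSwapYZ t).IsPosDef where
  a_pos := hQ.a_pos
  minor_pos := by
    refine pos_of_mul_pos_right ?_ hQ.minor_pos.le
    rw [minor_mul_minor_shearSwapYZ]
    exact add_pos_of_pos_of_nonneg (mul_pos hQ.a_pos hQ.det_pos) (sq_nonneg _)
  det_pos := by simpa only [det_shearSwapYZ] using hQ.det_pos

lemma IsPosDef.exists_isReduced (hQ : Q.IsPosDef) :
    ∃ R : TernaryForm, R.IsPosDef ∧ R.IsReduced ∧ R.det = Q.det ∧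
      ∀ n, R.Represents n ↔ Q.Represents n := by
  induction hN : (Q.a + Q.minor).toNat using Nat.strong_induction_on generalizing Q with
  | _ N ih =>
    subst hN
    have ha := hQ.a_pos
    have hminor := hQ.minor_pos
    by_cases hred : Q.IsReduced
    · exact ⟨Q, hQ, hred, rfl, fun _ => Iff.rfl⟩
    obtain h | h : 4 * Q.minor < 3 * Q.a ^ 2 ∨ 4 * (Q.a * Q.det) < 3 * Q.minor ^ 2 := by
      by_contra! h
      exact hred ⟨h.1, h.2⟩
    · obtain ⟨t, ht⟩ := exists_lt_of_mul_eq_add_sq ha h Q.a_mul_a_shearSwapXY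
      obtain ⟨R, hR, hRred, hdet, hrep⟩ :=
        ih _ (by rw [minor_shearSwapXY]; omega) (hQ.shearSwapXY t) rfl
      exact ⟨R, hR, hRred, by rw [hdet, det_shearSwapXY],
        fun n => (hrep n).trans (Q.represents_shearSwapXY t)⟩
    · obtain ⟨t, ht⟩ := exists_lt_of_mul_eq_add_sq hminor h Q.minor_mul_minor_shearSwapYZ
      have ha' : (Q.shearSwapYZ t).a = Q.a := rfl
      obtain ⟨R, hR, hRred, hdet, hrep⟩ := ih _ (by rw [ha']; omega) (hQ.shearSwapYZ t) rfl
      exact ⟨R, hR, hRred, by rw [hdet, det_shearSwapYZ],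
        fun n => (hrep n).trans (Q.represents_shearSwapYZ t)⟩

lemma IsReduced.a_pow_three_le (hred : Q.IsReduced) (ha : 0 < Q.a) :
    27 * Q.a ^ 3 ≤ 64 * Q.det := by
  have hquartic : 9 * Q.a ^ 4 ≤ 16 * Q.minor ^ 2 :=
    calc 9 * Q.a ^ 4 = (3 * Q.a ^ 2) ^ 2 := by ring
      _ ≤ (4 * Q.minor) ^ 2 := pow_le_pow_left₀ (by positivity) hred.a_sq_le 2
      _ = 16 * Q.minor ^ 2 := by ring
  refine le_of_mul_le_mul_left ?_ ha
  linarith [hred.minor_sq_le]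

lemma IsReduced.a_eq_one_and_minor_eq_one (hred : Q.IsReduced) (ha : 0 < Q.a)
    (hdet : Q.det = 1) : Q.a = 1 ∧ Q.minor = 1 := by
  have ha_lt : Q.a < 2 :=
    lt_of_pow_lt_pow_left₀ 3 zero_le_two (by linarith [hred.a_pow_three_le ha])
  have ha_one : Q.a = 1 := by omega
  have ha_sq := hred.a_sq_le
  have hminor_sq := hred.minor_sq_le
  rw [ha_one] at ha_sq
  rw [ha_one, hdet] at hminor_sq
  have hminor_lt : Q.minor < 2 := lt_of_pow_lt_pow_left₀ 2 zero_le_two (by linarith)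
  exact ⟨ha_one, by omega⟩

lemma IsPosDef.isSumOfThreeSquares_of_det_eq_one (hQ : Q.IsPosDef) (hdet : Q.det = 1) {n : ℤ}
    (hn : Q.Represents n) : IsSumOfThreeSquares n := by
  obtain ⟨R, hR, hRred, hRdet, hrep⟩ := hQ.exists_isReduced
  rw [hdet] at hRdet
  obtain ⟨ha, hminor⟩ := hRred.a_eq_one_and_minor_eq_one hR.a_pos hRdet
  obtain ⟨x, y, z, rfl⟩ := (hrep n).2 hn
  have hsquares := R.a_mul_minor_mul_eval x y z
  simp only [ha, hminor, hRdet, one_mul] at hsquares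
  exact ⟨_, _, _, hsquares.symm⟩

end TernaryForm

lemma isSumOfThreeSquares_of_dvd_sq_add {n b s : ℤ} (hb : 0 < b) (hbn : 1 < b * n)
    (hs : b * n - 1 ∣ s ^ 2 + b) : IsSumOfThreeSquares n := by
  obtain ⟨a, ha⟩ := hs
  let Q : TernaryForm := ⟨a, b * n - 1, n, 0, 1, s⟩
  have hminor : Q.minor = b := by
    simp only [TernaryForm.minor, Q]
    linear_combination -ha
  have hdet : Q.det = 1 := by
    simp only [TernaryForm.det, Q]
    linear_combination -n * ha
  have ha_pos : 0 < a := by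
    refine pos_of_mul_pos_right ?_ (sub_pos.2 hbn).le
    rw [← ha]
    positivity
  have hQ : Q.IsPosDef := ⟨ha_pos, hminor ▸ hb, hdet ▸ one_pos⟩
  exact hQ.isSumOfThreeSquares_of_det_eq_one hdet ⟨0, 0, 1, by simp [TernaryForm.eval, Q]⟩

lemma exists_dvd_sq_add_of_jacobiSym_eq_one {p : ℕ} (hp : p.Prime) {b : ℤ}
    (h : jacobiSym (-b) p = 1) : ∃ s : ℤ, (p : ℤ) ∣ s ^ 2 + b := by
  have := Fact.mk hp
  obtain ⟨r, hr⟩ := ZMod.isSquare_of_jacobiSym_eq_one h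
  obtain ⟨s, rfl⟩ := ZMod.intCast_surjective r
  refine ⟨s, (ZMod.intCast_zmod_eq_zero_iff_dvd _ _).1 ?_⟩
  push_cast at hr ⊢
  rw [pow_two, ← hr, neg_add_cancel]

lemma exists_two_mul_dvd_sq_add {p b s : ℤ} (hp : Odd p) (hs : p ∣ s ^ 2 + b) :
    ∃ s' : ℤ, 2 * p ∣ s' ^ 2 + b := by
  have hcop : IsCoprime 2 p := Int.isCoprime_two_left.2 hp
  obtain heven | hodd := Int.even_or_odd (s ^ 2 + b)
  · exact ⟨s, hcop.mul_dvd heven.two_dvd hs⟩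
  · have hshift : (s + p) ^ 2 + b = s ^ 2 + b + p * (2 * s + p) := by ring
    refine ⟨s + p, hcop.mul_dvd ?_ ?_⟩ <;> rw [hshift]
    · exact (hodd.add_odd (hp.mul ((even_two_mul s).add_odd hp))).two_dvd
    · exact dvd_add hs (dvd_mul_right _ _)

lemma jacobiSym_neg_left_eq {b p : ℕ} (hb : Odd b) (hp : Odd p) (h : p % 4 = 1 ∨ b % 4 = 3) :
    jacobiSym (-b) p = jacobiSym p b := by
  rw [jacobiSym.neg _ hp]
  obtain hp4 | hp4 := Nat.odd_mod_four_iff.1 (Nat.odd_iff.1 hp)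
  · rw [ZMod.χ₄_nat_one_mod_four hp4, one_mul, jacobiSym.quadratic_reciprocity_one_mod_four' hb hp4]
  · have hb4 : b % 4 = 3 := h.resolve_left (by omega)
    rw [ZMod.χ₄_nat_three_mod_four hp4, jacobiSym.quadratic_reciprocity_three_mod_four hb4 hp4,
      neg_one_mul, neg_neg]

lemma isSumOfThreeSquares_of_mul_eq_prime_add_one {n b p : ℕ} (hp : p.Prime) (hp4 : p % 4 = 1)
    (hb4 : b % 4 = 1) (h : b * n = p + 1) : IsSumOfThreeSquares n := by
  have hb : Odd b := Nat.odd_iff.2 (by omega)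
  have h' : (b * n : ℤ) = p + 1 := by exact_mod_cast h
  have hmod : (p : ℤ) ≡ -1 [ZMOD b] :=
    Int.modEq_iff_dvd.2 ⟨-n, by linear_combination h'⟩
  have hJ : jacobiSym (-b) p = 1 := by
    rw [jacobiSym_neg_left_eq hb (Nat.odd_iff.2 (by omega)) (.inl hp4), jacobiSym.mod_left' hmod,
      jacobiSym.at_neg_one hb, ZMod.χ₄_nat_one_mod_four hb4]
  obtain ⟨s, hs⟩ := exists_dvd_sq_add_of_jacobiSym_eq_one hp hJ
  refine isSumOfThreeSquares_of_dvd_sq_add (b := b) (s := s) (by omega) (by omega) ?_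
  rwa [h', add_sub_cancel_right]

lemma isSumOfThreeSquares_of_mul_eq_two_mul_prime_add_one {n b p : ℕ} (hp : p.Prime)
    (hp_odd : Odd p) (hb8 : b % 8 = 1 ∨ b % 8 = 3) (hpb : p % 4 = 1 ∨ b % 4 = 3)
    (h : b * n = 2 * p + 1) : IsSumOfThreeSquares n := by
  have hb : Odd b := Nat.odd_iff.2 (by omega)
  have h' : (b * n : ℤ) = 2 * p + 1 := by exact_mod_cast h
  have hneg_two : jacobiSym (-2) b = 1 := by
    rw [jacobiSym.at_neg_two hb, ZMod.χ₈'_nat_eq_if_mod_eight, if_neg (by omega), if_pos hb8]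
  have hmod : -2 * (p : ℤ) ≡ 1 [ZMOD b] :=
    Int.modEq_iff_dvd.2 ⟨n, by linear_combination -h'⟩
  have hJ : jacobiSym (-b) p = 1 :=
    calc jacobiSym (-b) p = jacobiSym p b := jacobiSym_neg_left_eq hb hp_odd hpb
      _ = jacobiSym (-2 * p) b := by rw [jacobiSym.mul_left, hneg_two, one_mul]
      _ = 1 := by rw [jacobiSym.mod_left' hmod, jacobiSym.one_left]
  obtain ⟨s, hs⟩ := exists_dvd_sq_add_of_jacobiSym_eq_one hp hJ
  obtain ⟨s', hs'⟩ := exists_two_mul_dvd_sq_add (by exact_mod_cast hp_odd) hs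
  have hp_pos := hp.pos
  refine isSumOfThreeSquares_of_dvd_sq_add (b := b) (s := s') (by omega) (by omega) ?_
  rwa [h', add_sub_cancel_right]

lemma exists_prime_four_mul_mul_add {n r : ℕ} (hn : n ≠ 0) (hr : Odd r) (hrn : r.Coprime n) :
    ∃ m : ℕ, (4 * n * m + r).Prime := by
  have hcop : r.Coprime (4 * n) := (hr.coprime_two_right.pow_right 2).mul_right hrn
  obtain ⟨p, hgt, hp, hmod⟩ := Nat.forall_exists_prime_gt_and_modEq r (by positivity) hcop
  obtain ⟨m, hm⟩ := (Nat.modEq_iff_dvd' hgt.le).1 hmod.symm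
  exact ⟨m, by rwa [← hm, Nat.sub_add_cancel hgt.le]⟩

lemma isSumOfThreeSquares_of_mod_four_eq_two {n : ℕ} (hn : n % 4 = 2) :
    IsSumOfThreeSquares n := by
  obtain ⟨r, rfl⟩ : ∃ r, n = r + 1 := ⟨n - 1, by omega⟩
  obtain ⟨m, hp⟩ := exists_prime_four_mul_mul_add (n := r + 1) (r := r) (by omega)
    (Nat.odd_iff.2 (by omega)) (by simp)
  refine isSumOfThreeSquares_of_mul_eq_prime_add_one (b := 4 * m + 1) hp ?_ (by omega) (by ring)
  rw [mul_assoc]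
  omega

lemma isSumOfThreeSquares_of_mul_eq_two_mul_add_one {n c r : ℕ} (hc : c % 8 = 1 ∨ c % 8 = 3)
    (hr : Odd r) (hrc : r % 4 = 1 ∨ c % 4 = 3) (h : c * n = 2 * r + 1) :
    IsSumOfThreeSquares n := by
  have hn : n ≠ 0 := by
    rintro rfl
    omega
  have hcop : r.Coprime n := by
    have : r.Coprime (c * n) := by simp [h]
    exact this.coprime_mul_left_right
  obtain ⟨m, hp⟩ := exists_prime_four_mul_mul_add hn hr hcop
  have hmod : (4 * n * m + r) % 4 = r % 4 := by
    rw [mul_assoc, Nat.mul_add_mod]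
  refine isSumOfThreeSquares_of_mul_eq_two_mul_prime_add_one (b := 8 * m + c) hp ?_ (by omega)
    (by omega) (by linear_combination h)
  rw [Nat.odd_iff] at hr ⊢
  omega

lemma isSumOfThreeSquares_of_not_four_dvd {n : ℕ} (h4 : ¬ 4 ∣ n) (h7 : n % 8 ≠ 7) :
    IsSumOfThreeSquares n := by
  obtain h | h | h : n % 4 = 2 ∨ n % 8 = 3 ∨ n % 4 = 1 := by omega
  · exact isSumOfThreeSquares_of_mod_four_eq_two h
  · exact isSumOfThreeSquares_of_mul_eq_two_mul_add_one (c := 1) (r := n / 2) (by omega)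
      (Nat.odd_iff.2 (by omega)) (by omega) (by omega)
  · exact isSumOfThreeSquares_of_mul_eq_two_mul_add_one (c := 3) (r := 3 * n / 2) (by omega)
      (Nat.odd_iff.2 (by omega)) (by omega) (by omega)

lemma not_isSumOfThreeSquares_of_emod_eight_eq_seven {n : ℤ} (hn : n % 8 = 7) :
    ¬ IsSumOfThreeSquares n := by
  rintro ⟨x, y, z, rfl⟩
  have hresidues : ∀ x y z : ZMod 8, x ^ 2 + y ^ 2 + z ^ 2 ≠ 7 := by decide
  refine hresidues x y z ?_
  exact_mod_cast (ZMod.intCast_eq_intCast_iff (x ^ 2 + y ^ 2 + z ^ 2) 7 8).2 hn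

lemma even_of_four_dvd_sq_add_sq_add_sq {x y z : ℤ} (h : 4 ∣ x ^ 2 + y ^ 2 + z ^ 2) :
    Even x ∧ Even y ∧ Even z := by
  have sq_mod_four (t : ℤ) : t % 2 = 0 ∧ t ^ 2 % 4 = 0 ∨ t ^ 2 % 4 = 1 := by
    obtain ht | ht := Int.even_or_odd t
    · exact .inl ⟨Int.even_iff.1 ht, Int.emod_eq_zero_of_dvd (pow_dvd_pow_of_dvd ht.two_dvd 2)⟩
    · exact .inr (Int.sq_mod_four_eq_one_of_odd ht)
  have hx := sq_mod_four x
  have hy := sq_mod_four y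
  have hz := sq_mod_four z
  simp only [Int.even_iff]
  omega

lemma isSumOfThreeSquares_four_mul {n : ℤ} :
    IsSumOfThreeSquares (4 * n) ↔ IsSumOfThreeSquares n := by
  constructor
  · rintro ⟨x, y, z, h⟩
    obtain ⟨⟨x, rfl⟩, ⟨y, rfl⟩, ⟨z, rfl⟩⟩ := even_of_four_dvd_sq_add_sq_add_sq ⟨n, h⟩
    exact ⟨x, y, z, by linarith⟩
  · rintro ⟨x, y, z, rfl⟩
    exact ⟨2 * x, 2 * y, 2 * z, by ring⟩

lemma isSumOfThreeSquares_four_pow_mul (a : ℕ) {n : ℤ} :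
    IsSumOfThreeSquares (4 ^ a * n) ↔ IsSumOfThreeSquares n := by
  induction a with
  | zero => rw [pow_zero, one_mul]
  | succ a ih => rw [pow_succ', mul_assoc, isSumOfThreeSquares_four_mul, ih]

lemma finite_setOf_sq_add_sq_add_sq_eq (n : ℤ) :
    {v : ℤ × ℤ × ℤ | v.1 ^ 2 + v.2.1 ^ 2 + v.2.2 ^ 2 = n}.Finite := by
  refine (Set.finite_Icc ((-n, -n, -n) : ℤ × ℤ × ℤ) (n, n, n)).subset ?_
  rintro ⟨x, y, z⟩ (h : x ^ 2 + y ^ 2 + z ^ 2 = n)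
  have bound {t : ℤ} (ht : t ^ 2 ≤ n) : -n ≤ t ∧ t ≤ n :=
    abs_le.1 ((sq_abs t ▸ Int.le_self_sq |t|).trans ht)
  have hx := bound (t := x) (by linarith [sq_nonneg y, sq_nonneg z])
  have hy := bound (t := y) (by linarith [sq_nonneg x, sq_nonneg z])
  have hz := bound (t := z) (by linarith [sq_nonneg x, sq_nonneg y])
  exact ⟨⟨hx.1, hy.1, hz.1⟩, ⟨hx.2, hy.2, hz.2⟩⟩

lemma r3_eq_zero_iff {n : ℕ} : r3 n = 0 ↔ ¬ IsSumOfThreeSquares n := by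
  have : Finite {v : ℤ × ℤ × ℤ // v.1 ^ 2 + v.2.1 ^ 2 + v.2.2 ^ 2 = n} :=
    (finite_setOf_sq_add_sq_add_sq_eq n).to_subtype
  rw [r3, Finite.card_eq_zero_iff, isEmpty_subtype]
  simp only [IsSumOfThreeSquares, not_exists, Prod.forall]

/-- Legendre's three-square theorem: for n ≥ 1,
r₃(n) = 0 iff n = 4^a(8k+7) for some nonnegative integers a, k. -/
theorem legendre_three_squares (n : ℕ) (hn : 1 ≤ n) :
    r3 n = 0 ↔ ∃ a k : ℕ, n = 4 ^ a * (8 * k + 7) := by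
  rw [r3_eq_zero_iff]
  constructor
  · intro h
    obtain ⟨a, m, hm, rfl⟩ := Nat.exists_eq_pow_mul_and_not_dvd (by omega : n ≠ 0) 4 (by norm_num)
    push_cast at h
    rw [isSumOfThreeSquares_four_pow_mul] at h
    have hm7 : m % 8 = 7 := by_contra fun hm7 => h (isSumOfThreeSquares_of_not_four_dvd hm hm7)
    exact ⟨a, m / 8, by rw [← hm7, Nat.div_add_mod]⟩
  · rintro ⟨a, k, rfl⟩
    push_cast
    rw [isSumOfThreeSquares_four_pow_mul]
    exact not_isSumOfThreeSquares_of_emod_eight_eq_seven (by omega)
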